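/- arXiv:math/9812112 — 3 statements merged into one kernel-verified Lean document; each statement's English description precedes it below -/
import Mathlib

section
/- Let F be a field of characteristic not 2 and let M be the generic 2×3 matrix with entries x_{ij} over R = F[x_{ij} : i=1,2, j=1,2,3]. Then the ideal P_2(M) generated by the three 2×2 subpermanents of M is a radical ideal. -/
open MvPolynomial

namespace Perm23

noncomputable section

variable {F : Type*} [Field F]

open Classical in
/-- set the variables in `S` to zero -/
def kill (S : Set (Fin 2 × Fin 3)) :
    MvPolynomial (Fin 2 × Fin 3) F →ₐ[F] MvPolynomial (Fin 2 × Fin 3) F :=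
  aeval (fun i => if i ∈ S then 0 else X i)

open Classical in
theorem kill_X (S : Set (Fin 2 × Fin 3)) (i) :
    kill S (X i : MvPolynomial (Fin 2 × Fin 3) F) = if i ∈ S then 0 else X i := by
  simp [kill]

theorem kill_monomial (S : Set (Fin 2 × Fin 3)) (s : Fin 2 × Fin 3 →₀ ℕ) (c : F) :
    ((∀ i ∈ S, s i = 0) ∧ kill S (monomial s c) = monomial s c) ∨
    ((∃ i ∈ S, s i ≠ 0) ∧ kill S (monomial s c) = 0) := by
  classical
  by_cases h : ∀ i ∈ S, s i = 0
  · left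
    refine ⟨h, ?_⟩
    rw [kill, aeval_monomial, monomial_eq, algebraMap_eq]
    congr 1
    apply Finset.prod_congr rfl
    intro i hi
    have : i ∉ S := fun hS => by simp [h i hS] at hi
    simp [this]
  · right
    push Not at h
    refine ⟨h, ?_⟩
    obtain ⟨i, hi, hs⟩ := h
    rw [kill, aeval_monomial]
    apply mul_eq_zero_of_right
    apply Finset.prod_eq_zero (i := i) (by simpa using hs)
    simp [hi, hs]

theorem kill_comm (S T : Set (Fin 2 × Fin 3)) (f : MvPolynomial (Fin 2 × Fin 3) F) :
    kill S (kill T f) = kill T (kill S f) := by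
  classical
  have : (kill S).comp (kill T) = (kill T).comp (kill (F := F) S) := by
    apply algHom_ext
    intro i
    simp only [AlgHom.comp_apply, kill_X]
    split_ifs <;> simp [kill_X, *]
  exact congrArg (fun φ => φ f) this

/-- column -/
def C (k : Fin 3) : Set (Fin 2 × Fin 3) := {i | i.2 = k}
/-- row -/
def A (k : Fin 2) : Set (Fin 2 × Fin 3) := {i | i.1 = k}

variable (F) in
/-- the ideal -/
def I : Ideal (MvPolynomial (Fin 2 × Fin 3) F) :=
  Ideal.span {f : MvPolynomial (Fin 2 × Fin 3) F |
        ∃ j l : Fin 3, j < l ∧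
          f = X (0, j) * X (1, l) + X (1, j) * X (0, l)}

/-- generator -/
def g (j l : Fin 3) : MvPolynomial (Fin 2 × Fin 3) F :=
  X (0, j) * X (1, l) + X (1, j) * X (0, l)

theorem g_comm (j l : Fin 3) : g (F := F) j l = g l j := by unfold g; ring

theorem g_mem {j l : Fin 3} (h : j ≠ l) : g j l ∈ I F := by
  rcases lt_or_gt_of_ne h with h | h
  · exact Ideal.subset_span ⟨j, l, h, rfl⟩
  · rw [g_comm]; exact Ideal.subset_span ⟨l, j, h, rfl⟩

theorem g_prime {j l : Fin 3} (h : j ≠ l) : Prime (g (F := F) j l) := by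
  classical
  rw [← UniqueFactorizationMonoid.irreducible_iff_prime]
  have : g (F := F) j l = X (0, j) * X (1, l) + X (1, j) * X (0, l) := rfl
  rw [this]
  apply irreducible_mul_X_add
  · exact X_ne_zero _
  · simp
  · intro h'
    have := vars_mul _ _ h'
    simp [h.symm] at this
  · have hp : Prime (X (0, j) : MvPolynomial (Fin 2 × Fin 3) F) := X_prime
    rw [← UniqueFactorizationMonoid.irreducible_iff_prime] at hp
    rw [hp.isRelPrime_iff_not_dvd]
    rw [UniqueFactorizationMonoid.irreducible_iff_prime] at hp
    intro hd
    rcases hp.dvd_or_dvd hd with hd | hd <;> simp [X_dvd_X, h] at hd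

theorem abc_mem (h2 : (2 : F) ≠ 0) (r t : Fin 2) (hrt : r ≠ t) (i j k : Fin 3) (hij : i ≠ j)
    (hik : i ≠ k) (hjk : j ≠ k) : X (r, i) * X (r, j) * X (t, k) ∈ I F := by
  have key : (MvPolynomial.C 2 : MvPolynomial (Fin 2 × Fin 3) F) * (X (r, i) * X (r, j) * X (t, k)) ∈ I F := by
    have := (I F).sub_mem ((I F).add_mem ((I F).mul_mem_left (X (r, i)) (g_mem hjk))
      ((I F).mul_mem_left (X (r, j)) (g_mem hik))) ((I F).mul_mem_left (X (r, k)) (g_mem hij))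
    convert this using 1
    have : (MvPolynomial.C 2 : MvPolynomial (Fin 2 × Fin 3) F) = 2 := map_ofNat MvPolynomial.C 2
    rw [this]
    unfold g
    fin_cases r <;> fin_cases t <;> simp at hrt ⊢ <;> ring
  have := (I F).mul_mem_left (MvPolynomial.C (2⁻¹ : F)) key
  rwa [← mul_assoc, ← MvPolynomial.C_mul, inv_mul_cancel₀ h2, MvPolynomial.C_1, one_mul] at this

theorem mono_mem3 (h2 : (2 : F) ≠ 0) (r t : Fin 2) (hrt : r ≠ t) (i j k : Fin 3) (hij : i ≠ j)
    (hik : i ≠ k) (hjk : j ≠ k) (s : Fin 2 × Fin 3 →₀ ℕ) (c : F)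
    (h1 : s (r, i) ≠ 0) (h3 : s (r, j) ≠ 0) (h4 : s (t, k) ≠ 0) : monomial s c ∈ I F := by
  classical
  refine Ideal.mem_of_dvd _ ?_ (abc_mem h2 r t hrt i j k hij hik hjk)
  have : (X (r, i) * X (r, j) * X (t, k) : MvPolynomial (Fin 2 × Fin 3) F) =
    monomial (Finsupp.single (r, i) 1 + Finsupp.single (r, j) 1 + Finsupp.single (t, k) 1) 1 := by
    simp [X, monomial_mul]
  rw [this, monomial_dvd_monomial]
  refine ⟨Or.inr ?_, one_dvd _⟩
  intro x
  simp only [Finsupp.add_apply, Finsupp.single_apply]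
  by_cases e1 : (r, i) = x
  · subst e1; simp [hij.symm, hrt.symm]; omega
  by_cases e2 : (r, j) = x
  · subst e2; simp [hij, hrt.symm]; omega
  by_cases e3 : (t, k) = x
  · subst e3; simp [hrt]; omega
  simp [e1, e2, e3]

theorem mono_mem (h2 : (2 : F) ≠ 0) (s : Fin 2 × Fin 3 →₀ ℕ) (c : F)
    (hC : ∀ k, ∃ r, s (r, k) ≠ 0) (hA : ∀ r, ∃ k, s (r, k) ≠ 0) : monomial s c ∈ I F := by
  have key : ∃ r t : Fin 2, ∃ i j k : Fin 3, r ≠ t ∧ i ≠ j ∧ i ≠ k ∧ j ≠ k ∧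
      s (r, i) ≠ 0 ∧ s (r, j) ≠ 0 ∧ s (t, k) ≠ 0 := by
    by_contra hcon
    have K : ∀ r t : Fin 2, ∀ i j k : Fin 3, r ≠ t → i ≠ j → i ≠ k → j ≠ k →
      s (r, i) ≠ 0 → s (r, j) ≠ 0 → s (t, k) = 0 := by
      intro r t i j k a b c d e f
      by_contra h
      exact hcon ⟨r, t, i, j, k, a, b, c, d, e, f, h⟩
    have a1 := K 0 1 0 1 2 (by decide) (by decide) (by decide) (by decide)
    have a2 := K 0 1 0 2 1 (by decide) (by decide) (by decide) (by decide)
    have a3 := K 0 1 1 2 0 (by decide) (by decide) (by decide) (by decide)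
    have b1 := K 1 0 0 1 2 (by decide) (by decide) (by decide) (by decide)
    have b2 := K 1 0 0 2 1 (by decide) (by decide) (by decide) (by decide)
    have b3 := K 1 0 1 2 0 (by decide) (by decide) (by decide) (by decide)
    have c0 := hC 0
    have c1 := hC 1
    have c2 := hC 2
    have d0 := hA 0
    have d1 := hA 1
    simp only [Fin.exists_fin_two, Fin.exists_fin_succ, Fin.succ_zero_eq_one, Fin.succ_one_eq_two,
      IsEmpty.exists_iff, or_false] at c0 c1 c2 d0 d1
    clear K hcon hC hA
    grind
  obtain ⟨r, t, i, j, k, h⟩ := key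
  exact mono_mem3 h2 r t h.1 i j k h.2.1 h.2.2.1 h.2.2.2.1 s c h.2.2.2.2.1 h.2.2.2.2.2.1
    h.2.2.2.2.2.2

/-- projection to the monomials involving all columns -/
def D : MvPolynomial (Fin 2 × Fin 3) F →ₗ[F] MvPolynomial (Fin 2 × Fin 3) F :=
  (LinearMap.id - (kill (C 0)).toLinearMap) ∘ₗ (LinearMap.id - (kill (C 1)).toLinearMap) ∘ₗ
    (LinearMap.id - (kill (C 2)).toLinearMap)

theorem D_apply (f : MvPolynomial (Fin 2 × Fin 3) F) : D f =
    f - kill (C 2) f - kill (C 1) (f - kill (C 2) f)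
      - kill (C 0) (f - kill (C 2) f - kill (C 1) (f - kill (C 2) f)) := by
  simp [D]

theorem main_mem (h2 : (2 : F) ≠ 0) (f : MvPolynomial (Fin 2 × Fin 3) F) :
    D (f - kill (A 0) f - kill (A 1) f) ∈ I F := by
  induction f using MvPolynomial.induction_on' with
  | add p q hp hq =>
    have := (I F).add_mem hp hq
    rw [← map_add] at this
    convert this using 2
    simp only [map_add]; ring
  | monomial s c =>
    rcases kill_monomial (C 0) s c with ⟨hc0, e0⟩ | ⟨hc0, e0⟩ <;>
    rcases kill_monomial (C 1) s c with ⟨hc1, e1⟩ | ⟨hc1, e1⟩ <;>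
    rcases kill_monomial (C 2) s c with ⟨hc2, e2⟩ | ⟨hc2, e2⟩ <;>
    rcases kill_monomial (A 0) s c with ⟨ha0, d0⟩ | ⟨ha0, d0⟩ <;>
    rcases kill_monomial (A 1) s c with ⟨ha1, d1⟩ | ⟨ha1, d1⟩ <;>
    simp only [D_apply, e0, e1, e2, d0, d1, map_sub, map_zero, map_neg, sub_self, sub_zero,
      zero_sub, neg_zero, neg_neg, zero_mem]
    · exfalso
      obtain ⟨⟨r, k⟩, -, hr⟩ := hc0
      have : r = 0 ∨ r = 1 := by omega
      rcases this with rfl | rfl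
      · exact hr (ha0 _ rfl)
      · exact hr (ha1 _ rfl)
    · apply mono_mem h2
      · intro k
        have aux : ∀ k, (∃ i ∈ C k, s i ≠ 0) → ∃ r, s (r, k) ≠ 0 := by
          rintro k ⟨⟨r, _⟩, rfl, h⟩
          exact ⟨r, h⟩
        fin_cases k
        exacts [aux _ hc0, aux _ hc1, aux _ hc2]
      · intro r
        have aux : ∀ r, (∃ i ∈ A r, s i ≠ 0) → ∃ k, s (r, k) ≠ 0 := by
          rintro r ⟨⟨_, k⟩, rfl, h⟩
          exact ⟨k, h⟩
        fin_cases r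
        exacts [aux _ ha0, aux _ ha1]

theorem kill_g_mem (k j l : Fin 3) (h : j ≠ l) : kill (C k) (g j l) ∈ I F := by
  classical
  have := g_mem (F := F) h
  by_cases h1 : j = k
  · simp [g, kill_X, C, h1]
  by_cases h3 : l = k
  · simp [g, kill_X, C, h3]
  · simpa [g, kill_X, C, h1, h3] using this

theorem kill_C_mem (k : Fin 3) (f : MvPolynomial (Fin 2 × Fin 3) F) (hf : f ∈ I F) :
    kill (C k) f ∈ I F := by
  have : I F ≤ (I F).comap (kill (C k)) := by
    refine Ideal.span_le.2 ?_
    rintro _ ⟨j, l, h, rfl⟩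
    exact kill_g_mem k j l h.ne
  exact this hf

theorem kill_C_mem' (i j k : Fin 3) (hij : i ≠ j) (hik : i ≠ k) (hjk : j ≠ k) 
    (f : MvPolynomial (Fin 2 × Fin 3) F) (hf : f ∈ I F) :
    g i j ∣ kill (C k) f := by
  classical
  have : I F ≤ (Ideal.span {g (F := F) i j}).comap (kill (C k)) := by
    refine Ideal.span_le.2 ?_
    rintro _ ⟨a, b, h, rfl⟩
    change kill (C k) (g (F := F) a b) ∈ Ideal.span {g (F := F) i j}
    rw [Ideal.mem_span_singleton]
    by_cases h1 : a = k
    · simp [g, kill_X, C, h1]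
    by_cases h3 : b = k
    · simp [g, kill_X, C, h3]
    have : g (F := F) i j = g a b := by
      have : (a = i ∧ b = j) ∨ (a = j ∧ b = i) := by omega
      rcases this with ⟨rfl, rfl⟩ | ⟨rfl, rfl⟩
      · rfl
      · exact g_comm _ _
    rw [this]
    simp [g, kill_X, C, h1, h3]
  exact Ideal.mem_span_singleton.1 (this hf)

theorem kill_A (r : Fin 2) (f : MvPolynomial (Fin 2 × Fin 3) F) (hf : f ∈ I F) :
    kill (A r) f = 0 := by
  classical
  have : I F ≤ RingHom.ker (kill (F := F) (A r)) := by
    refine Ideal.span_le.2 ?_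
    rintro _ ⟨a, b, h, rfl⟩
    fin_cases r <;> simp [kill_X, A, RingHom.mem_ker]
  exact this hf

theorem rad (h2 : (2 : F) ≠ 0) : (I F).IsRadical := by
  rintro f ⟨n, hn⟩
  have hA : ∀ r, kill (A r) f = 0 := fun r => by
    have := kill_A r _ hn
    rw [map_pow] at this
    exact eq_zero_of_pow_eq_zero this
  have hC' : ∀ i j k : Fin 3, i ≠ j → i ≠ k → j ≠ k → kill (C k) f ∈ I F := by
    intro i j k hij hik hjk
    have := kill_C_mem' i j k hij hik hjk _ hn
    rw [map_pow] at this
    exact Ideal.mem_of_dvd _ ((g_prime hij).dvd_of_dvd_pow this) (g_mem hij)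
  have h0 := hC' 1 2 0 (by decide) (by decide) (by decide)
  have h1 := hC' 0 2 1 (by decide) (by decide) (by decide)
  have h3 := hC' 0 1 2 (by decide) (by decide) (by decide)
  have hm := main_mem h2 f
  rw [hA, hA, sub_zero, sub_zero, D_apply] at hm
  have e1 : kill (C 1) (f - kill (C 2) f) ∈ I F := by
    rw [map_sub]; exact sub_mem h1 (kill_C_mem _ _ h3)
  have e2 : kill (C 0) (f - kill (C 2) f - kill (C 1) (f - kill (C 2) f)) ∈ I F := by
    rw [map_sub, map_sub]
    exact sub_mem (sub_mem h0 (kill_C_mem _ _ h3)) (kill_C_mem _ _ e1)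
  have := add_mem (add_mem (add_mem hm e2) e1) h3
  simpa using this

end

end Perm23

/-- `M` is the generic 2×3 matrix with entries `x_{ij} = X (i,j)` over
`R = F[x_{ij}]`, char F ≠ 2.  The ideal `P₂(M)` generated by the three 2×2
subpermanents of `M` is radical. -/
theorem permanental_two_by_three_radical (F : Type*) [Field F] (h2 : (2 : F) ≠ 0) :
    (Ideal.span {f : MvPolynomial (Fin 2 × Fin 3) F |
        ∃ j l : Fin 3, j < l ∧
          f = X (0, j) * X (1, l) + X (1, j) * X (0, l)}).IsRadical :=
  Perm23.rad h2
end

section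
/- Let F be a field of characteristic not 2 and let M = [[a,b,c],[x,y,z],[u,v,w]] be the generic 3×3 matrix over R = F[a,...,w]. Then the radical of the ideal P_2(M) of 2×2 subpermanents equals P_2(M) + ⟨products x_{1p}x_{2q}x_{3r} of entries from three distinct rows and three distinct columns⟩, i.e., rad(P_2(M)) = P_2(M) + ⟨ayw, azv, bxw, bzu, cxv, cyu⟩. -/
open MvPolynomial

namespace PermThree

variable {F : Type*} [Field F]

/-- The polynomial ring in the nine entries. -/
abbrev R (F : Type*) [Field F] := MvPolynomial (Fin 3 × Fin 3) F

/-- Mutually distinct columns in two rows. -/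
lemma rowPair (h2 : (2 : F) ≠ 0) (I : Ideal (R F))
    (hI : ∀ i k j l : Fin 3, i ≠ k → j ≠ l → X (i, j) * X (k, l) + X (k, j) * X (i, l) ∈ I)
    (i k j l m : Fin 3) (hik : i ≠ k) (hjl : j ≠ l) (hjm : j ≠ m) (hlm : l ≠ m) :
    (X (i, j) * X (i, l) * X (k, m) : R F) ∈ I := by
  have h : (C (2⁻¹ : F) : R F) * (X (i, j) * (X (i, l) * X (k, m) + X (k, l) * X (i, m))
      - X (i, m) * (X (i, j) * X (k, l) + X (k, j) * X (i, l))
      + X (i, l) * (X (i, j) * X (k, m) + X (k, j) * X (i, m))) ∈ I :=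
    I.mul_mem_left _ (I.add_mem (I.sub_mem (I.mul_mem_left _ (hI _ _ _ _ hik hlm))
      (I.mul_mem_left _ (hI _ _ _ _ hik hjl))) (I.mul_mem_left _ (hI _ _ _ _ hik hjm)))
  have hc : (C (2⁻¹ : F) : R F) * 2 = 1 := by
    rw [show (2 : R F) = C 2 from (map_ofNat C 2).symm, ← C_mul, inv_mul_cancel₀ h2, C_1]
  convert h using 1
  linear_combination (-(X (i, j) * X (i, l) * X (k, m)) : R F) * hc

lemma colPair (h2 : (2 : F) ≠ 0) (I : Ideal (R F))
    (hI : ∀ i k j l : Fin 3, i ≠ k → j ≠ l → X (i, j) * X (k, l) + X (k, j) * X (i, l) ∈ I)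
    (i k j l m : Fin 3) (hik : i ≠ k) (hjl : j ≠ l) (hjm : j ≠ m) (hlm : l ≠ m) :
    (X (j, i) * X (l, i) * X (m, k) : R F) ∈ I := by
  have h : (C (2⁻¹ : F) : R F) * (X (j, i) * (X (l, i) * X (m, k) + X (m, i) * X (l, k))
      - X (m, i) * (X (j, i) * X (l, k) + X (l, i) * X (j, k))
      + X (l, i) * (X (j, i) * X (m, k) + X (m, i) * X (j, k))) ∈ I :=
    I.mul_mem_left _ (I.add_mem (I.sub_mem (I.mul_mem_left _ (hI _ _ _ _ hlm hik))
      (I.mul_mem_left _ (hI _ _ _ _ hjl hik))) (I.mul_mem_left _ (hI _ _ _ _ hjm hik)))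
  have hc : (C (2⁻¹ : F) : R F) * 2 = 1 := by
    rw [show (2 : R F) = C 2 from (map_ofNat C 2).symm, ← C_mul, inv_mul_cancel₀ h2, C_1]
  convert h using 1
  linear_combination (-(X (j, i) * X (l, i) * X (m, k)) : R F) * hc

/-- The square of a transversal monomial lies in the ideal. -/
lemma transversal_sq (h2 : (2 : F) ≠ 0) (I : Ideal (R F))
    (hI : ∀ i k j l : Fin 3, i ≠ k → j ≠ l → X (i, j) * X (k, l) + X (k, j) * X (i, l) ∈ I)
    (i k n j l m : Fin 3) (hik : i ≠ k) (hkn : k ≠ n)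
    (hjl : j ≠ l) (hjm : j ≠ m) (hlm : l ≠ m) :
    (X (i, j) * X (k, l) * X (n, m) : R F) ∈ I.radical := by
  refine ⟨2, ?_⟩
  have h : (X (i, j) * X (k, l) * X (n, m) : R F) *
      (X (n, m) * (X (i, j) * X (k, l) + X (k, j) * X (i, l))
        - X (i, l) * (X (k, j) * X (n, m) + X (n, j) * X (k, m)))
      + (X (n, m) * X (i, l) * X (n, j)) * (X (k, l) * X (k, m) * X (i, j)) ∈ I :=
    I.add_mem (I.mul_mem_left _ (I.sub_mem (I.mul_mem_left _ (hI _ _ _ _ hik hjl))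
      (I.mul_mem_left _ (hI _ _ _ _ hkn hjm))))
      (I.mul_mem_left _ (rowPair h2 I hI _ _ _ _ _ hik.symm hlm hjl.symm hjm.symm))
  convert h using 1
  ring

/-- Set the variables outside `B` to zero. -/
noncomputable def proj (B : Finset (Fin 3 × Fin 3)) : R F →ₐ[F] R F :=
  aeval fun p => if p ∈ B then X p else 0

lemma proj_X (B : Finset (Fin 3 × Fin 3)) (p : Fin 3 × Fin 3) :
    proj (F := F) B (X p) = if p ∈ B then X p else 0 := by
  simp [proj]

lemma proj_monomial (B : Finset (Fin 3 × Fin 3)) (d : Fin 3 × Fin 3 →₀ ℕ) (c : F) :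
    proj (F := F) B (monomial d c) = if d.support ⊆ B then monomial d c else 0 := by
  rw [proj, aeval_monomial]
  split_ifs with h
  · rw [monomial_eq, algebraMap_eq]
    congr 1
    refine Finset.prod_congr rfl fun p hp => ?_
    simp only [if_pos (h hp)]
  · obtain ⟨p, hp, hpB⟩ := Finset.not_subset.mp h
    rw [Finsupp.prod, Finset.prod_eq_zero hp, mul_zero]
    simp only [if_neg hpB]
    exact zero_pow (Finsupp.mem_support_iff.mp hp)

lemma coeff_proj (B : Finset (Fin 3 × Fin 3)) (f : R F) (d : Fin 3 × Fin 3 →₀ ℕ) :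
    coeff d (proj B f) = if d.support ⊆ B then coeff d f else 0 := by
  induction f using MvPolynomial.induction_on' with
  | monomial e c =>
    rw [proj_monomial]
    by_cases hed : e = d
    · subst hed
      split_ifs <;> simp
    · split_ifs <;> simp [hed]
  | add p q hp hq =>
    rw [map_add, coeff_add, hp, hq, coeff_add]
    split_ifs <;> simp

/-- The complement of row `p` and column `q`. -/
def blk (p q : Fin 3) : Finset (Fin 3 × Fin 3) := Finset.univ.filter fun s => s.1 ≠ p ∧ s.2 ≠ q

/-- The row `p`. -/
def rw3 (p : Fin 3) : Finset (Fin 3 × Fin 3) := Finset.univ.filter fun s => s.1 = p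

/-- The column `q`. -/
def cl3 (q : Fin 3) : Finset (Fin 3 × Fin 3) := Finset.univ.filter fun s => s.2 = q

/-- The permanent of the block. -/
noncomputable def perm (p q : Fin 3) : R F :=
  X (p + 1, q + 1) * X (p + 2, q + 2) + X (p + 2, q + 1) * X (p + 1, q + 2)

lemma perm_prime (p q : Fin 3) : Prime (perm p q : R F) := by
  have hirr : Irreducible ((X (p + 1, q + 1) : R F) * X (p + 2, q + 2)
      + X (p + 2, q + 1) * X (p + 1, q + 2)) := by
    apply irreducible_mul_X_add
    · exact X_ne_zero _
    · simp [vars_X]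
    · intro h
      have := vars_mul _ _ h
      simp [vars_X] at this
    · rw [(X_prime (R := F)).irreducible.isRelPrime_iff_not_dvd]
      intro h
      rcases (X_prime (R := F)).dvd_or_dvd h with h | h <;>
      · rw [X_dvd_X] at h
        simp at h
  exact hirr.prime

/-- A monomial whose support contains three given points is in an ideal containing their product. -/
lemma monomial_mem (J : Ideal (R F)) (d : Fin 3 × Fin 3 →₀ ℕ) (c : F) (s t r : Fin 3 × Fin 3)
    (hs : s ∈ d.support) (ht : t ∈ d.support) (hr : r ∈ d.support)
    (hst : s ≠ t) (hsr : s ≠ r) (htr : t ≠ r)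
    (h : (X s * X t * X r : R F) ∈ J) : monomial d c ∈ J := by
  have hdvd : (X s * X t * X r : R F) ∣ monomial d c := by
    have e : (X s * X t * X r : R F) =
        monomial (Finsupp.single s 1 + Finsupp.single t 1 + Finsupp.single r 1) 1 := by
      simp [X, monomial_mul]
    rw [e, monomial_dvd_monomial]
    refine ⟨Or.inr fun p => ?_, one_dvd _⟩
    simp only [Finsupp.add_apply, Finsupp.single_apply]
    rw [Finsupp.mem_support_iff] at hs ht hr
    split_ifs <;> subst_vars <;> first | contradiction | omega
  exact J.mem_of_dvd hdvd h

/-- Monomials with support in no row, column or block. -/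
lemma bad_monomial (h2 : (2 : F) ≠ 0) (J : Ideal (R F))
    (hI : ∀ i k j l : Fin 3, i ≠ k → j ≠ l → X (i, j) * X (k, l) + X (k, j) * X (i, l) ∈ J)
    (hT : ∀ i k n : Fin 3, i ≠ k → i ≠ n → k ≠ n →
      (X (i, 0) * X (k, 1) * X (n, 2) : R F) ∈ J)
    (d : Fin 3 × Fin 3 →₀ ℕ) (c : F)
    (hrow : ∀ p, ¬ d.support ⊆ rw3 p) (hcol : ∀ q, ¬ d.support ⊆ cl3 q)
    (hblk : ∀ p q, ¬ d.support ⊆ blk p q) : monomial d c ∈ J := by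
  have key1 : ∀ i k n : Fin 3, ¬ (i = k ∧ k = n) → (i, 0) ∈ d.support → (k, 1) ∈ d.support →
      (n, 2) ∈ d.support → monomial d c ∈ J := by
    intro i k n hne h0 h1 h3
    refine monomial_mem J d c _ _ _ h0 h1 h3 (by simp) (by simp) (by simp) ?_
    by_cases h01 : i = k
    · subst h01
      exact rowPair h2 J hI _ _ _ _ _ (by simpa using hne) (by decide) (by decide) (by decide)
    by_cases h02 : i = n
    · subst h02
      have := rowPair h2 J hI i k 0 2 1 h01 (by decide) (by decide) (by decide)
      convert this using 1
      ring
    by_cases h12 : k = n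
    · subst h12
      have := rowPair h2 J hI k i 1 2 0 (Ne.symm h01) (by decide) (by decide) (by decide)
      convert this using 1
      ring
    exact hT _ _ _ h01 h02 h12
  have hT2 : ∀ i k n : Fin 3, i ≠ k → i ≠ n → k ≠ n →
      (X (0, i) * X (1, k) * X (2, n) : R F) ∈ J := by
    intro i k n h01 h02 h12
    have a := hT 0 1 2 (by decide) (by decide) (by decide)
    have b := hT 0 2 1 (by decide) (by decide) (by decide)
    have c := hT 1 0 2 (by decide) (by decide) (by decide)
    have d := hT 1 2 0 (by decide) (by decide) (by decide)
    have e := hT 2 0 1 (by decide) (by decide) (by decide)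
    have f := hT 2 1 0 (by decide) (by decide) (by decide)
    fin_cases i <;> fin_cases k <;> fin_cases n <;> simp at h01 h02 h12 <;>
      first
      | exact a
      | (convert b using 1; simp; ring; done)
      | (convert c using 1; simp; ring; done)
      | (convert d using 1; simp; ring; done)
      | (convert e using 1; simp; ring; done)
      | (convert f using 1; simp; ring; done)
  have key2 : ∀ i k n : Fin 3, ¬ (i = k ∧ k = n) → (0, i) ∈ d.support → (1, k) ∈ d.support →
      (2, n) ∈ d.support → monomial d c ∈ J := by
    intro i k n hne h0 h1 h3
    refine monomial_mem J d c _ _ _ h0 h1 h3 (by simp) (by simp) (by simp) ?_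
    by_cases h01 : i = k
    · subst h01
      exact colPair h2 J hI _ _ _ _ _ (by simpa using hne) (by decide) (by decide) (by decide)
    by_cases h02 : i = n
    · subst h02
      have := colPair h2 J hI i k 0 2 1 h01 (by decide) (by decide) (by decide)
      convert this using 1
      ring
    by_cases h12 : k = n
    · subst h12
      have := colPair h2 J hI k i 1 2 0 (Ne.symm h01) (by decide) (by decide) (by decide)
      convert this using 1
      ring
    exact hT2 _ _ _ h01 h02 h12
  by_cases hall : ∀ q, ∃ p, (p, q) ∈ d.support
  · obtain ⟨i, hi⟩ := hall 0
    obtain ⟨k, hk⟩ := hall 1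
    obtain ⟨n, hn⟩ := hall 2
    by_cases hne : i = k ∧ k = n
    · obtain ⟨rfl, rfl⟩ := hne
      obtain ⟨⟨p, q⟩, hp, hpn⟩ := Finset.not_subset.mp (hrow i)
      have hpi : p ≠ i := by simpa [rw3] using hpn
      fin_cases q
      · exact key1 p i i (fun h => hpi h.1) hp hk hn
      · exact key1 i p i (fun h => hpi h.2) hi hp hn
      · exact key1 i i p (fun h => hpi h.2.symm) hi hk hp
    · exact key1 i k n hne hi hk hn
  · push Not at hall
    obtain ⟨q, hq⟩ := hall
    have hall2 : ∀ p, ∃ q, (p, q) ∈ d.support := by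
      intro p
      obtain ⟨⟨s, t⟩, hs, hsn⟩ := Finset.not_subset.mp (hblk p q)
      have htq : t ≠ q := by
        rintro rfl
        exact hq s hs
      have : s = p := by
        by_contra hsp
        exact hsn (by simp [blk, hsp, htq])
      exact ⟨t, this ▸ hs⟩
    obtain ⟨i, hi⟩ := hall2 0
    obtain ⟨k, hk⟩ := hall2 1
    obtain ⟨n, hn⟩ := hall2 2
    by_cases hne : i = k ∧ k = n
    · obtain ⟨rfl, rfl⟩ := hne
      obtain ⟨⟨p, q⟩, hp, hpn⟩ := Finset.not_subset.mp (hcol i)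
      have hpi : q ≠ i := by simpa [cl3] using hpn
      fin_cases p
      · exact key2 q i i (fun h => hpi h.1) hp hk hn
      · exact key2 i q i (fun h => hpi h.2) hi hp hn
      · exact key2 i i q (fun h => hpi h.2.symm) hi hk hp
    · exact key2 i k n hne hi hk hn

lemma third : ∀ a b : Fin 3, a ≠ b → ∃ q, ∀ x : Fin 3, x ≠ a → x ≠ b → x = q := by
  decide

/-- Polynomials vanishing on rows and columns, with block parts in the ideal. -/
lemma mem_of_proj (h2 : (2 : F) ≠ 0) (J : Ideal (R F))
    (hI : ∀ i k j l : Fin 3, i ≠ k → j ≠ l → X (i, j) * X (k, l) + X (k, j) * X (i, l) ∈ J)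
    (hT : ∀ i k n : Fin 3, i ≠ k → i ≠ n → k ≠ n →
      (X (i, 0) * X (k, 1) * X (n, 2) : R F) ∈ J)
    (f : R F) (hrow : ∀ p, proj (rw3 p) f = 0) (hcol : ∀ q, proj (cl3 q) f = 0)
    (hblk : ∀ p q, proj (blk p q) f ∈ J) : f ∈ J := by
  have hsum : ∑ s : Fin 3 × Fin 3, proj (blk s.1 s.2) f ∈ J :=
    J.sum_mem fun s _ => hblk s.1 s.2
  suffices h : f - ∑ s : Fin 3 × Fin 3, proj (blk s.1 s.2) f ∈ J by
    simpa using J.add_mem h hsum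
  set g := f - ∑ s : Fin 3 × Fin 3, proj (blk s.1 s.2) f with hg
  rw [g.as_sum]
  refine J.sum_mem fun d _ => ?_
  have hcoeff : coeff d g = coeff d f -
      ∑ s : Fin 3 × Fin 3, if d.support ⊆ blk s.1 s.2 then coeff d f else 0 := by
    rw [hg, coeff_sub, coeff_sum]
    simp only [coeff_proj]
  have hz : coeff d f = 0 → monomial d (coeff d g) ∈ J := by
    intro h0
    simp [hcoeff, h0]
  by_cases hr : ∃ p, d.support ⊆ rw3 p
  · obtain ⟨p, hp⟩ := hr
    apply hz
    have := coeff_proj (rw3 p) f d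
    rw [hrow, if_pos hp] at this
    simpa using this.symm
  by_cases hc : ∃ p, d.support ⊆ cl3 p
  · obtain ⟨p, hp⟩ := hc
    apply hz
    have := coeff_proj (cl3 p) f d
    rw [hcol, if_pos hp] at this
    simpa using this.symm
  push Not at hr hc
  by_cases hb : ∃ s : Fin 3 × Fin 3, d.support ⊆ blk s.1 s.2
  · obtain ⟨s, hs⟩ := hb
    have : coeff d g = 0 := by
      rw [hcoeff, Finset.sum_eq_single s, if_pos hs, sub_self]
      · rintro t - hts
        rw [if_neg]
        intro ht
        by_cases h1 : t.1 = s.1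
        · have h2 : t.2 ≠ s.2 := fun h => hts (Prod.ext h1 h)
          have : ∃ q, ∀ x : Fin 3, x ≠ t.2 → x ≠ s.2 → x = q := third _ _ h2
          obtain ⟨q, hq⟩ := this
          refine hc q fun x hx => ?_
          have hx1 := ht hx
          have hx2 := hs hx
          simp only [blk, cl3, Finset.mem_filter, Finset.mem_univ, true_and] at *
          exact hq _ hx1.2 hx2.2
        · have : ∃ q, ∀ x : Fin 3, x ≠ t.1 → x ≠ s.1 → x = q := third _ _ h1
          obtain ⟨q, hq⟩ := this
          refine hr q fun x hx => ?_
          have hx1 := ht hx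
          have hx2 := hs hx
          simp only [blk, rw3, Finset.mem_filter, Finset.mem_univ, true_and] at *
          exact hq _ hx1.1 hx2.1
      · simp
    simp [this]
  · push Not at hb
    exact bad_monomial h2 J hI hT d _ hr hc fun p q => hb (p, q)

end PermThree

open PermThree in
/-- `M = [[a,b,c],[x,y,z],[u,v,w]]` is the generic 3×3 matrix with entry
`(i,j)` the variable `X (i,j)`.  The radical of `P₂(M)` equals `P₂(M)` plus
the ideal generated by the six monomials `ayw, azv, bxw, bzu, cxv, cyu`
(the products of entries from three distinct rows and columns). -/
theorem radical_permanental_three_by_three (F : Type*) [Field F] (h2 : (2 : F) ≠ 0) :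
    (Ideal.span {f : MvPolynomial (Fin 3 × Fin 3) F |
        ∃ i k j l : Fin 3, i < k ∧ j < l ∧
          f = X (i, j) * X (k, l) + X (k, j) * X (i, l)}).radical =
      Ideal.span {f : MvPolynomial (Fin 3 × Fin 3) F |
        ∃ i k j l : Fin 3, i < k ∧ j < l ∧
          f = X (i, j) * X (k, l) + X (k, j) * X (i, l)} +
      Ideal.span ({X (0, 0) * X (1, 1) * X (2, 2),
        X (0, 0) * X (1, 2) * X (2, 1),
        X (0, 1) * X (1, 0) * X (2, 2),
        X (0, 1) * X (1, 2) * X (2, 0),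
        X (0, 2) * X (1, 0) * X (2, 1),
        X (0, 2) * X (1, 1) * X (2, 0)} :
        Set (MvPolynomial (Fin 3 × Fin 3) F)) := by
  set P : Ideal (R F) := Ideal.span {f : MvPolynomial (Fin 3 × Fin 3) F |
        ∃ i k j l : Fin 3, i < k ∧ j < l ∧
          f = X (i, j) * X (k, l) + X (k, j) * X (i, l)} with hP
  set T : Ideal (R F) := Ideal.span ({X (0, 0) * X (1, 1) * X (2, 2),
        X (0, 0) * X (1, 2) * X (2, 1),
        X (0, 1) * X (1, 0) * X (2, 2),
        X (0, 1) * X (1, 2) * X (2, 0),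
        X (0, 2) * X (1, 0) * X (2, 1),
        X (0, 2) * X (1, 1) * X (2, 0)} :
        Set (MvPolynomial (Fin 3 × Fin 3) F)) with hT
  have hPI : ∀ i k j l : Fin 3, i ≠ k → j ≠ l →
      (X (i, j) * X (k, l) + X (k, j) * X (i, l) : R F) ∈ P := by
    intro i k j l hik hjl
    rcases lt_or_gt_of_ne hik with h | h <;> rcases lt_or_gt_of_ne hjl with h' | h'
    · exact Ideal.subset_span ⟨i, k, j, l, h, h', rfl⟩
    · exact Ideal.subset_span ⟨i, k, l, j, h, h', by ring⟩
    · exact Ideal.subset_span ⟨k, i, j, l, h, h', by ring⟩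
    · exact Ideal.subset_span ⟨k, i, l, j, h, h', by ring⟩
  have hPJ : P ≤ P + T := le_sup_left
  have hTJ : T ≤ P + T := le_sup_right
  have hTT : ∀ i k n : Fin 3, i ≠ k → i ≠ n → k ≠ n →
      (X (i, 0) * X (k, 1) * X (n, 2) : R F) ∈ T := by
    intro i k n h01 h02 h12
    apply Ideal.subset_span
    simp only [Set.mem_insert_iff, Set.mem_singleton_iff]
    fin_cases i <;> fin_cases k <;> fin_cases n <;> simp at h01 h02 h12
    · left; rfl
    · right; left; simp; ring
    · right; right; left; simp; ring
    · right; right; right; right; left; simp; ring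
    · right; right; right; left; simp; ring
    · right; right; right; right; right; simp; ring
  -- projections of the right-hand side
  have hproj : ∀ (B : Finset (Fin 3 × Fin 3)) (K : Ideal (R F)),
      (∀ i k j l : Fin 3, i < k → j < l →
        proj B (X (i, j) * X (k, l) + X (k, j) * X (i, l) : R F) ∈ K) →
      ((∃ p, ∀ s ∈ B, s.1 ≠ p) ∨ (∃ q, ∀ s ∈ B, s.2 ≠ q)) →
      P + T ≤ K.comap (proj B) := by
    intro B K hK hB
    have hmon : ∀ i k n : Fin 3, i ≠ k → i ≠ n → k ≠ n →
        proj (F := F) B (X (0, i)) * proj B (X (1, k)) * proj B (X (2, n)) = 0 := by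
      intro i k n h01 h02 h12
      have : (0, i) ∉ B ∨ (1, k) ∉ B ∨ (2, n) ∉ B := by
        by_contra! hh
        obtain ⟨ha, hb, hc⟩ := hh
        rcases hB with ⟨p, hp⟩ | ⟨q, hq⟩
        · have := hp _ ha
          have := hp _ hb
          have := hp _ hc
          fin_cases p <;> simp_all
        · have h1 := hq _ ha
          have h2 := hq _ hb
          have h3 := hq _ hc
          simp only at h1 h2 h3
          omega
      rcases this with h | h | h <;> simp [proj_X, h]
    refine sup_le ?_ ?_
    · rw [hP, Ideal.span_le]
      rintro f ⟨i, k, j, l, hik, hjl, rfl⟩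
      exact hK i k j l hik hjl
    · rw [hT, Ideal.span_le]
      intro f hf
      simp only [Set.mem_insert_iff, Set.mem_singleton_iff] at hf
      rw [SetLike.mem_coe, Ideal.mem_comap]
      rcases hf with rfl | rfl | rfl | rfl | rfl | rfl <;>
      · rw [map_mul, map_mul, hmon _ _ _ (by decide) (by decide) (by decide)]
        exact K.zero_mem
  apply le_antisymm
  · rintro f ⟨n, hn⟩
    have hn : f ^ n ∈ P + T := hPJ hn
    refine mem_of_proj h2 (P + T) (fun i k j l a b => hPJ (hPI i k j l a b))
      (fun i k n a b c => hTJ (hTT i k n a b c)) f ?_ ?_ ?_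
    · intro p
      have := hproj (rw3 p) ⊥ ?_ (Or.inl ⟨p + 1, ?_⟩) hn
      · rw [Ideal.mem_comap, map_pow, Ideal.mem_bot] at this
        exact eq_zero_of_pow_eq_zero this
      · intro i k j l hik hjl
        rw [Ideal.mem_bot]
        have hne : i ≠ p ∨ k ≠ p := by
          by_contra! h
          exact hik.ne (h.1.trans h.2.symm)
        rcases hne with h | h <;> simp [proj_X, rw3, h]
      · intro s hs
        have : s.1 = p := by simpa [rw3] using hs
        rw [this]
        simp
    · intro p
      have := hproj (cl3 p) ⊥ ?_ (Or.inr ⟨p + 1, ?_⟩) hn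
      · rw [Ideal.mem_comap, map_pow, Ideal.mem_bot] at this
        exact eq_zero_of_pow_eq_zero this
      · intro i k j l hik hjl
        rw [Ideal.mem_bot]
        have hne : j ≠ p ∨ l ≠ p := by
          by_contra! h
          exact hjl.ne (h.1.trans h.2.symm)
        rcases hne with h | h <;> simp [proj_X, cl3, h]
      · intro s hs
        have : s.2 = p := by simpa [cl3] using hs
        rw [this]
        simp
    · intro p q
      have := hproj (blk p q) (Ideal.span {perm p q}) ?_ (Or.inl ⟨p, ?_⟩) hn
      · rw [Ideal.mem_comap, map_pow, Ideal.mem_span_singleton] at this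
        have hd := (perm_prime p q).dvd_of_dvd_pow this
        refine (P + T).mem_of_dvd hd (hPJ (hPI _ _ _ _ ?_ ?_)) <;> simp
      · intro i k j l hik hjl
        by_cases h : (i ≠ p ∧ k ≠ p) ∧ (j ≠ q ∧ l ≠ q)
        · obtain ⟨⟨h1, h2⟩, h3, h4⟩ := h
          have e : proj (blk p q) (X (i, j) * X (k, l) + X (k, j) * X (i, l) : R F)
              = X (i, j) * X (k, l) + X (k, j) * X (i, l) := by
            simp [proj_X, blk, h1, h2, h3, h4]
          rw [e, Ideal.mem_span_singleton]
          have aux : ∀ i k p : Fin 3, i < k → i ≠ p → k ≠ p →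
              (i = p + 1 ∧ k = p + 2) ∨ (i = p + 2 ∧ k = p + 1) := by decide
          apply dvd_of_eq
          rw [perm]
          rcases aux i k p hik h1 h2 with ⟨rfl, rfl⟩ | ⟨rfl, rfl⟩ <;>
          rcases aux j l q hjl h3 h4 with ⟨rfl, rfl⟩ | ⟨rfl, rfl⟩ <;> ring
        · have e : proj (blk p q) (X (i, j) * X (k, l) + X (k, j) * X (i, l) : R F) = 0 := by
            have : i = p ∨ k = p ∨ j = q ∨ l = q := by tauto
            rcases this with h | h | h | h <;> simp [proj_X, blk, h]
          rw [e]
          exact Ideal.zero_mem _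
      · intro s hs
        have : s.1 ≠ p ∧ s.2 ≠ q := by simpa [blk] using hs
        exact this.1
  · refine sup_le Ideal.le_radical ?_
    rw [hT, Ideal.span_le]
    intro f hf
    simp only [Set.mem_insert_iff, Set.mem_singleton_iff] at hf
    rcases hf with rfl | rfl | rfl | rfl | rfl | rfl <;>
    exact transversal_sq h2 P hPI _ _ _ _ _ _ (by decide) (by decide) (by decide) (by decide)
      (by decide)
end

section
/- Let F be a field of characteristic not 2, m,n ≥ 3, and let M be the generic m×n matrix over R = F[x_{ij}]. Primes of type (1), generated by all entries outside one row, have height (m-1)n; primes of type (2), generated by all entries outside one column, have height m(n-1); primes of type (3), generated by one 2×2 subpermanent and all entries outside its 2×2 block, have height mn-3. In particular, for (m,n) ≠ (3,3) not all minimal primes of P_2(M) have the same height, so R/P_2(M) is not equidimensional. -/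
open MvPolynomial

section Helpers

variable {σ : Type*} [DecidableEq σ] {F : Type*} [Field F]

/-- The endomorphism killing the variables in `S`. -/
noncomputable def killVars (F : Type*) [Field F] (S : Finset σ) :
    MvPolynomial σ F →ₐ[F] MvPolynomial σ F :=
  aeval (fun s => if s ∈ S then 0 else X s)

lemma killVars_sub_mem (S : Finset σ) (g : MvPolynomial σ F) :
    g - killVars F S g ∈ Ideal.span ((X : σ → MvPolynomial σ F) '' (S : Set σ)) := by
  induction g using MvPolynomial.induction_on with
  | C a => simp [killVars, algebraMap_eq]
  | add p q hp hq =>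
    rw [map_add]
    have := Ideal.add_mem _ hp hq
    convert this using 1
    ring
  | mul_X p s hp =>
    rw [map_mul]
    by_cases hs : s ∈ S
    · have : killVars F S (X s) = 0 := by simp [killVars, hs]
      rw [this, mul_zero, sub_zero]
      exact Ideal.mul_mem_left _ _ (Ideal.subset_span ⟨s, hs, rfl⟩)
    · have : killVars F S (X s) = X s := by simp [killVars, hs]
      rw [this, ← sub_mul]
      exact Ideal.mul_mem_right _ _ hp

lemma span_union_eq_comap (S : Finset σ) (f : MvPolynomial σ F) (hf : killVars F S f = f) :
    Ideal.span ({f} ∪ (X : σ → MvPolynomial σ F) '' (S : Set σ)) =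
      (Ideal.span {f}).comap (killVars F S) := by
  apply le_antisymm
  · rw [Ideal.span_le]
    rintro g (hg | ⟨s, hs, rfl⟩)
    · rw [Set.mem_singleton_iff] at hg
      subst hg
      simp only [SetLike.mem_coe, Ideal.mem_comap]
      rw [hf]
      exact Ideal.mem_span_singleton_self _
    · simp only [SetLike.mem_coe, Ideal.mem_comap]
      have : killVars F S (X s) = 0 := by simp only [killVars, aeval_X]; exact if_pos hs
      rw [this]
      exact Ideal.zero_mem _
  · intro g hg
    rw [Ideal.mem_comap] at hg
    have h1 := Ideal.span_mono (Set.subset_union_right (s := {f})) (killVars_sub_mem S g)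
    have h2 := Ideal.span_mono
      (Set.subset_union_left (t := (X : σ → MvPolynomial σ F) '' (S : Set σ))) hg
    have := Ideal.add_mem _ h1 h2
    simpa using this

lemma span_X_eq_comap (S : Finset σ) :
    Ideal.span ((X : σ → MvPolynomial σ F) '' (S : Set σ)) =
      (⊥ : Ideal (MvPolynomial σ F)).comap (killVars F S) := by
  have := span_union_eq_comap S (0 : MvPolynomial σ F) (map_zero _)
  rw [Ideal.span_union] at this
  simpa using this

lemma isPrime_span_X (S : Finset σ) :
    (Ideal.span ((X : σ → MvPolynomial σ F) '' (S : Set σ))).IsPrime := by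
  rw [span_X_eq_comap]
  have : (⊥ : Ideal (MvPolynomial σ F)).IsPrime := Ideal.isPrime_bot
  exact Ideal.comap_isPrime _ _

lemma X_mem_span_X (S : Finset σ) (s : σ)
    (h : (X s : MvPolynomial σ F) ∈ Ideal.span ((X : σ → MvPolynomial σ F) '' (S : Set σ))) :
    s ∈ S := by
  rw [span_X_eq_comap] at h
  by_contra hs
  simp [killVars, hs] at h

lemma le_height_span_X (S : Finset σ) :
    (S.card : ℕ∞) ≤ Order.height (⟨_, isPrime_span_X S⟩ : PrimeSpectrum (MvPolynomial σ F)) := by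
  induction S using Finset.induction_on with
  | empty => simp
  | insert s S hs ih =>
    rw [Finset.card_insert_of_notMem hs]
    push_cast
    refine (add_le_add_left ih 1).trans (Order.height_add_one_le ?_)
    rw [← PrimeSpectrum.asIdeal_lt_asIdeal]
    refine lt_of_le_of_ne (Ideal.span_mono (Set.image_mono (by simp))) fun h => ?_
    apply hs
    apply X_mem_span_X (F := F)
    have h' : Ideal.span ((X : σ → MvPolynomial σ F) '' (S : Set σ)) =
      Ideal.span ((X : σ → MvPolynomial σ F) '' ((insert s S : Finset σ) : Set σ)) := by
      simpa using h
    rw [h']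
    exact Ideal.subset_span ⟨s, by simp, rfl⟩

lemma height_le_card [Finite σ] (T : Finset (MvPolynomial σ F))
    (h : (Ideal.span (T : Set (MvPolynomial σ F))).IsPrime) :
    Order.height (⟨_, h⟩ : PrimeSpectrum (MvPolynomial σ F)) ≤ T.card := by
  have h1 : (Ideal.span (T : Set (MvPolynomial σ F))).height =
      Order.height (⟨_, h⟩ : PrimeSpectrum (MvPolynomial σ F)) :=
    PrimeSpectrum.height_eq_orderHeight (⟨_, h⟩ : PrimeSpectrum (MvPolynomial σ F))
  rw [← h1]
  apply Ideal.height_le_card_of_mem_minimalPrimes_span_finset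
  rw [Ideal.minimalPrimes_eq_subsingleton_self]
  rfl

lemma height_span_X [Finite σ] (S : Finset σ) :
    Order.height (⟨_, isPrime_span_X S⟩ : PrimeSpectrum (MvPolynomial σ F)) = S.card := by
  classical
  refine le_antisymm ?_ (le_height_span_X S)
  have key : ∀ (T : Finset (MvPolynomial σ F)) (I : Ideal (MvPolynomial σ F)) (hI : I.IsPrime),
      I = Ideal.span (T : Set (MvPolynomial σ F)) →
      Order.height (⟨I, hI⟩ : PrimeSpectrum (MvPolynomial σ F)) ≤ T.card := by
    rintro T I hI rfl
    exact height_le_card T hI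
  refine (key (S.image X) _ _ (by simp)).trans ?_
  exact_mod_cast Finset.card_image_le

lemma height_span_union [Finite σ] (S : Finset σ) (f : MvPolynomial σ F)
    (hf : killVars F S f = f) (hp : Prime f) :
    ∃ h : (Ideal.span ({f} ∪ (X : σ → MvPolynomial σ F) '' (S : Set σ))).IsPrime,
      Order.height (⟨_, h⟩ : PrimeSpectrum (MvPolynomial σ F)) = (S.card + 1 : ℕ) := by
  classical
  have hprime : (Ideal.span ({f} ∪ (X : σ → MvPolynomial σ F) '' (S : Set σ))).IsPrime := by
    rw [span_union_eq_comap S f hf]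
    have : (Ideal.span {f}).IsPrime := (Ideal.span_singleton_prime hp.ne_zero).2 hp
    exact Ideal.comap_isPrime _ _
  refine ⟨hprime, le_antisymm ?_ ?_⟩
  · have key : ∀ (T : Finset (MvPolynomial σ F)) (I : Ideal (MvPolynomial σ F)) (hI : I.IsPrime),
        I = Ideal.span (T : Set (MvPolynomial σ F)) →
        Order.height (⟨I, hI⟩ : PrimeSpectrum (MvPolynomial σ F)) ≤ T.card := by
      rintro T I hI rfl
      exact height_le_card T hI
    refine (key (insert f (S.image X)) _ _ (by simp)).trans ?_
    have := Finset.card_insert_le f (S.image X)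
    have h3 : (S.image (X : σ → MvPolynomial σ F)).card ≤ S.card := Finset.card_image_le
    exact_mod_cast this.trans (by omega)
  · push_cast
    refine (add_le_add_left (le_height_span_X (F := F) S) 1).trans (Order.height_add_one_le ?_)
    rw [← PrimeSpectrum.asIdeal_lt_asIdeal]
    refine lt_of_le_of_ne (Ideal.span_mono Set.subset_union_right) fun h => ?_
    have h' : Ideal.span ((X : σ → MvPolynomial σ F) '' (S : Set σ)) =
      Ideal.span ({f} ∪ (X : σ → MvPolynomial σ F) '' (S : Set σ)) := h
    have h1 : f ∈ Ideal.span ((X : σ → MvPolynomial σ F) '' (S : Set σ)) := by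
      rw [h']; exact Ideal.subset_span (Or.inl rfl)
    rw [span_X_eq_comap, Ideal.mem_comap, hf] at h1
    exact hp.ne_zero (by simpa using h1)

lemma prime_perm (a b c d : σ) (hab : a ≠ b) (hac : a ≠ c) (had : a ≠ d) (hbd : b ≠ d)
    (hcd : c ≠ d) : Prime (X a * X d + X b * X c : MvPolynomial σ F) := by
  refine (irreducible_mul_X_add _ _ _ (X_ne_zero a) ?_ ?_ ?_).prime
  · simp [vars_X, had.symm]
  · intro h
    have := vars_mul _ _ h
    simp [vars_X, hbd.symm, hcd.symm] at this
  · have hX : Prime (X a : MvPolynomial σ F) := X_prime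
    rw [hX.irreducible.isRelPrime_iff_not_dvd]
    intro h
    rcases hX.dvd_or_dvd h with h | h
    · rw [X_dvd_X] at h; simp_all
    · rw [X_dvd_X] at h; simp_all

end Helpers

section Perm

variable {F : Type*} [Field F] {m n : ℕ}

/-- The ideal of 2×2 subpermanents. -/
noncomputable def permIdeal (F : Type*) [Field F] (m n : ℕ) : Ideal (MvPolynomial (Fin m × Fin n) F) :=
  Ideal.span {f : MvPolynomial (Fin m × Fin n) F |
          ∃ (i k : Fin m) (j l : Fin n), i < k ∧ j < l ∧
            f = X (i, j) * X (k, l) + X (k, j) * X (i, l)}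

lemma perm_mem (i k : Fin m) (j l : Fin n) (hik : i ≠ k) (hjl : j ≠ l) :
    (X (i, j) * X (k, l) + X (k, j) * X (i, l) : MvPolynomial (Fin m × Fin n) F)
      ∈ permIdeal F m n := by
  rcases lt_or_gt_of_ne hik with h | h <;> rcases lt_or_gt_of_ne hjl with h' | h'
  · exact Ideal.subset_span ⟨i, k, j, l, h, h', rfl⟩
  · exact Ideal.subset_span ⟨i, k, l, j, h, h', by ring⟩
  · exact Ideal.subset_span ⟨k, i, j, l, h, h', by ring⟩
  · exact Ideal.subset_span ⟨k, i, l, j, h, h', by ring⟩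

lemma two_not_mem (h2 : (2 : F) ≠ 0) {σ : Type*} (p : Ideal (MvPolynomial σ F)) [hp : p.IsPrime] :
    (2 : MvPolynomial σ F) ∉ p := by
  intro h
  apply hp.ne_top
  refine Ideal.eq_top_of_isUnit_mem _ h ?_
  have : (2 : MvPolynomial σ F) = C 2 := (map_ofNat C 2).symm
  rw [this]
  exact (isUnit_iff_ne_zero.2 h2).map C

/-- From a 2×3 block `a₁ a₂ a₃ / b₁ b₂ b₃`. -/
lemma block_mem {R : Type*} [CommRing R] (p : Ideal R) [hp : p.IsPrime] (h2 : (2 : R) ∉ p)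
    {a₁ a₂ a₃ b₁ b₂ b₃ : R} (h12 : a₁ * b₂ + b₁ * a₂ ∈ p) (h13 : a₁ * b₃ + b₁ * a₃ ∈ p)
    (h23 : a₂ * b₃ + b₂ * a₃ ∈ p) : a₂ ∈ p ∨ b₁ ∈ p ∨ a₃ ∈ p := by
  have h : 2 * (a₂ * (b₁ * a₃)) ∈ p := by
    have : 2 * (a₂ * (b₁ * a₃)) =
      a₂ * (a₁ * b₃ + b₁ * a₃) - a₁ * (a₂ * b₃ + b₂ * a₃) + a₃ * (a₁ * b₂ + b₁ * a₂) := by ring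
    rw [this]
    exact p.add_mem (p.sub_mem (p.mul_mem_left _ h13) (p.mul_mem_left _ h23))
      (p.mul_mem_left _ h12)
  rcases hp.mem_or_mem h with h | h
  · exact absurd h h2
  · rcases hp.mem_or_mem h with h | h
    · exact Or.inl h
    · exact Or.inr (hp.mem_or_mem h)

lemma exists_third (hn : 3 ≤ n) (a : Fin n) : ∃ b c : Fin n, a ≠ b ∧ a ≠ c ∧ b ≠ c := by
  have h := Finset.one_lt_card (s := (Finset.univ : Finset (Fin n)).erase a)
  rw [Finset.card_erase_of_mem (Finset.mem_univ _), Finset.card_univ, Fintype.card_fin] at h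
  obtain ⟨b, hb, c, hc, hbc⟩ := h.1 (by omega)
  exact ⟨b, c, (Finset.ne_of_mem_erase hb).symm, (Finset.ne_of_mem_erase hc).symm, hbc⟩

lemma row_minimal (h2 : (2 : F) ≠ 0) (hn : 3 ≤ n) (i₀ : Fin m)
    (hprime : (Ideal.span {f : MvPolynomial (Fin m × Fin n) F |
        ∃ (i : Fin m) (j : Fin n), i ≠ i₀ ∧ f = X (i, j)}).IsPrime) :
    (Ideal.span {f : MvPolynomial (Fin m × Fin n) F |
        ∃ (i : Fin m) (j : Fin n), i ≠ i₀ ∧ f = X (i, j)}) ∈ (permIdeal F m n).minimalPrimes := by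
  refine ⟨⟨hprime, ?_⟩, ?_⟩
  · refine Ideal.span_le.2 ?_
    rintro f ⟨i, k, j, l, hik, hjl, rfl⟩
    have hX : ∀ (i : Fin m) (j : Fin n), i ≠ i₀ → (X (i, j) : MvPolynomial (Fin m × Fin n) F) ∈
      (Ideal.span {f : MvPolynomial (Fin m × Fin n) F |
        ∃ (i : Fin m) (j : Fin n), i ≠ i₀ ∧ f = X (i, j)}) :=
      fun i j h => Ideal.subset_span ⟨i, j, h, rfl⟩
    by_cases hi : i = i₀
    · have hk : k ≠ i₀ := by rintro rfl; exact hik.ne hi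
      exact Ideal.add_mem _ (Ideal.mul_mem_left _ _ (hX _ _ hk)) (Ideal.mul_mem_right _ _ (hX _ _ hk))
    · exact Ideal.add_mem _ (Ideal.mul_mem_right _ _ (hX _ _ hi)) (Ideal.mul_mem_left _ _ (hX _ _ hi))
  · rintro p ⟨hp, hIp⟩ hle
    have hnot : ∀ j, (X (i₀, j) : MvPolynomial (Fin m × Fin n) F) ∉ p := by
      intro j hj
      have h1 : Ideal.span {f : MvPolynomial (Fin m × Fin n) F |
        ∃ (i : Fin m) (j : Fin n), i ≠ i₀ ∧ f = X (i, j)} ≤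
        RingHom.ker (eval (fun s : Fin m × Fin n => if s.1 = i₀ then (1 : F) else 0)) := by
        refine Ideal.span_le.2 ?_
        rintro f ⟨i, j, hi, rfl⟩
        simp [RingHom.mem_ker, hi]
      have := h1 (hle hj)
      simp [RingHom.mem_ker] at this
    refine Ideal.span_le.2 ?_
    rintro f ⟨i, j, hi, rfl⟩
    obtain ⟨j₂, j₃, h12, h13, h23⟩ := exists_third hn j
    have h2p := two_not_mem h2 p
    rcases block_mem p h2p (hIp (perm_mem i₀ i j j₂ hi.symm h12))
      (hIp (perm_mem i₀ i j j₃ hi.symm h13)) (hIp (perm_mem i₀ i j₂ j₃ hi.symm h23)) with h | h | h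
    · exact absurd h (hnot _)
    · exact h
    · exact absurd h (hnot _)

lemma col_minimal (h2 : (2 : F) ≠ 0) (hm : 3 ≤ m) (j₀ : Fin n)
    (hprime : (Ideal.span {f : MvPolynomial (Fin m × Fin n) F |
        ∃ (i : Fin m) (j : Fin n), j ≠ j₀ ∧ f = X (i, j)}).IsPrime) :
    (Ideal.span {f : MvPolynomial (Fin m × Fin n) F |
        ∃ (i : Fin m) (j : Fin n), j ≠ j₀ ∧ f = X (i, j)}) ∈ (permIdeal F m n).minimalPrimes := by
  refine ⟨⟨hprime, ?_⟩, ?_⟩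
  · refine Ideal.span_le.2 ?_
    rintro f ⟨i, k, j, l, hik, hjl, rfl⟩
    have hX : ∀ (i : Fin m) (j : Fin n), j ≠ j₀ → (X (i, j) : MvPolynomial (Fin m × Fin n) F) ∈
      (Ideal.span {f : MvPolynomial (Fin m × Fin n) F |
        ∃ (i : Fin m) (j : Fin n), j ≠ j₀ ∧ f = X (i, j)}) :=
      fun i j h => Ideal.subset_span ⟨i, j, h, rfl⟩
    by_cases hj : j = j₀
    · have hl : l ≠ j₀ := by rintro rfl; exact hjl.ne hj
      exact Ideal.add_mem _ (Ideal.mul_mem_left _ _ (hX _ _ hl)) (Ideal.mul_mem_left _ _ (hX _ _ hl))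
    · exact Ideal.add_mem _ (Ideal.mul_mem_right _ _ (hX _ _ hj))
        (Ideal.mul_mem_right _ _ (hX _ _ hj))
  · rintro p ⟨hp, hIp⟩ hle
    have hnot : ∀ i, (X (i, j₀) : MvPolynomial (Fin m × Fin n) F) ∉ p := by
      intro i hi
      have h1 : Ideal.span {f : MvPolynomial (Fin m × Fin n) F |
        ∃ (i : Fin m) (j : Fin n), j ≠ j₀ ∧ f = X (i, j)} ≤
        RingHom.ker (eval (fun s : Fin m × Fin n => if s.2 = j₀ then (1 : F) else 0)) := by
        refine Ideal.span_le.2 ?_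
        rintro f ⟨i, j, hj, rfl⟩
        simp [RingHom.mem_ker, hj]
      have := h1 (hle hi)
      simp [RingHom.mem_ker] at this
    refine Ideal.span_le.2 ?_
    rintro f ⟨i, j, hj, rfl⟩
    obtain ⟨i₂, i₃, h12, h13, h23⟩ := exists_third hm i
    have h2p := two_not_mem h2 p
    have hc : ∀ i i', i ≠ i' → (X (i, j₀) * X (i', j) + X (i, j) * X (i', j₀) :
        MvPolynomial (Fin m × Fin n) F) ∈ p := by
      intro i i' h
      have := hIp (perm_mem (F := F) i i' j₀ j h hj.symm)
      rwa [mul_comm (X (i', j₀))] at this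
    rcases block_mem p h2p (hc _ _ h12) (hc _ _ h13) (hc _ _ h23) with h | h | h
    · exact absurd h (hnot _)
    · exact h
    · exact absurd h (hnot _)

/-- The ideals of type (3). -/
noncomputable def blockIdeal (F : Type*) [Field F] {m n : ℕ} (i k : Fin m) (j l : Fin n) :
    Ideal (MvPolynomial (Fin m × Fin n) F) :=
  Ideal.span ({X (i, j) * X (k, l) + X (k, j) * X (i, l)} ∪
          {f : MvPolynomial (Fin m × Fin n) F |
            ∃ (p : Fin m) (q : Fin n),
              ¬ ((p = i ∨ p = k) ∧ (q = j ∨ q = l)) ∧ f = X (p, q)})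

lemma block_minimal (h2 : (2 : F) ≠ 0) (i k : Fin m) (j l : Fin n)
    (hik : i ≠ k) (hjl : j ≠ l) (hprime : (blockIdeal F i k j l).IsPrime) :
    blockIdeal F i k j l ∈ (permIdeal F m n).minimalPrimes := by
  have hX : ∀ (p : Fin m) (q : Fin n), ¬ ((p = i ∨ p = k) ∧ (q = j ∨ q = l)) →
      (X (p, q) : MvPolynomial (Fin m × Fin n) F) ∈ blockIdeal F i k j l :=
    fun p q h => Ideal.subset_span (Or.inr ⟨p, q, h, rfl⟩)
  have hf : X (i, j) * X (k, l) + X (k, j) * X (i, l) ∈ blockIdeal F i k j l :=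
    Ideal.subset_span (Or.inl rfl)
  refine ⟨⟨hprime, ?_⟩, ?_⟩
  · refine Ideal.span_le.2 ?_
    rintro f ⟨a, b, c, d, hab, hcd, rfl⟩
    have hab' := hab.ne
    have hcd' := hcd.ne
    by_cases h : ((a = i ∨ a = k) ∧ (b = i ∨ b = k)) ∧ ((c = j ∨ c = l) ∧ (d = j ∨ d = l))
    · obtain ⟨⟨h1, h2⟩, h3, h4⟩ := h
      rcases h1 with rfl | rfl <;> rcases h2 with rfl | rfl <;> rcases h3 with rfl | rfl <;>
        rcases h4 with rfl | rfl <;> first | exact absurd rfl hab' | exact absurd rfl hcd' | skip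
      · exact hf
      · rw [SetLike.mem_coe]; convert hf using 1; ring
      · rw [SetLike.mem_coe]; convert hf using 1; ring
      · rw [SetLike.mem_coe]; convert hf using 1; ring
    · have hA : X (a, c) ∈ blockIdeal F i k j l ∨ X (b, d) ∈ blockIdeal F i k j l := by
        by_cases h' : (a = i ∨ a = k) ∧ (c = j ∨ c = l)
        · exact Or.inr (hX _ _ (by tauto))
        · exact Or.inl (hX _ _ h')
      have hB : X (b, c) ∈ blockIdeal F i k j l ∨ X (a, d) ∈ blockIdeal F i k j l := by
        by_cases h' : (b = i ∨ b = k) ∧ (c = j ∨ c = l)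
        · exact Or.inr (hX _ _ (by tauto))
        · exact Or.inl (hX _ _ h')
      refine Ideal.add_mem _ ?_ ?_
      · rcases hA with h | h
        · exact Ideal.mul_mem_right _ _ h
        · exact Ideal.mul_mem_left _ _ h
      · rcases hB with h | h
        · exact Ideal.mul_mem_right _ _ h
        · exact Ideal.mul_mem_left _ _ h
  · rintro p ⟨hp, hIp⟩ hle
    let v : Fin m × Fin n → F := fun s =>
      if s = (k, j) then -1 else if (s.1 = i ∨ s.1 = k) ∧ (s.2 = j ∨ s.2 = l) then 1 else 0
    have h1 : blockIdeal F i k j l ≤ RingHom.ker (eval v) := by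
      refine Ideal.span_le.2 ?_
      rintro f (hf | ⟨a, b, h, rfl⟩)
      · rw [Set.mem_singleton_iff] at hf
        subst hf
        simp [RingHom.mem_ker, v, hik, hjl.symm]
      · have h3 : (a, b) ≠ (k, j) := by
          rintro h4
          rw [Prod.mk.injEq] at h4
          tauto
        simp only [SetLike.mem_coe, RingHom.mem_ker, eval_X, v]
        rw [if_neg h3, if_neg h]
    have hnot : ∀ a b, (a = i ∨ a = k) → (b = j ∨ b = l) →
        (X (a, b) : MvPolynomial (Fin m × Fin n) F) ∉ p := by
      intro a b ha hb hj
      have := h1 (hle hj)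
      simp only [RingHom.mem_ker, eval_X, v] at this
      by_cases hs : (a, b) = (k, j)
      · rw [if_pos hs] at this
        simp at this
      · rw [if_neg hs, if_pos ⟨ha, hb⟩] at this
        simp at this
    have h2p := two_not_mem h2 p
    -- rows
    have hrow : ∀ a a' b, (a = i ∨ a = k) → (a' = i ∨ a' = k) → a ≠ a' → b ≠ j → b ≠ l →
        (X (a, b) : MvPolynomial (Fin m × Fin n) F) ∈ p := by
      intro a a' b ha ha' haa hj hl
      rcases block_mem p h2p (hIp (perm_mem a a' j l haa hjl)) (hIp (perm_mem a a' j b haa hj.symm))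
        (hIp (perm_mem a a' l b haa hl.symm)) with h | h | h
      · exact absurd h (hnot _ _ ha (Or.inr rfl))
      · exact absurd h (hnot _ _ ha' (Or.inl rfl))
      · exact h
    have hcol : ∀ b b' a, (b = j ∨ b = l) → (b' = j ∨ b' = l) → b ≠ b' → a ≠ i → a ≠ k →
        (X (a, b) : MvPolynomial (Fin m × Fin n) F) ∈ p := by
      intro b b' a hb hb' hbb hi hk
      have hc : ∀ i i', i ≠ i' → (X (i, b) * X (i', b') + X (i, b') * X (i', b) :
          MvPolynomial (Fin m × Fin n) F) ∈ p := by
        intro i i' h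
        have := hIp (perm_mem (F := F) i i' b b' h hbb)
        rwa [mul_comm (X (i', b))] at this
      rcases block_mem p h2p (hc _ _ hik) (hc _ _ hi.symm) (hc _ _ hk.symm) with h | h | h
      · exact absurd h (hnot _ _ (Or.inr rfl) hb)
      · exact absurd h (hnot _ _ (Or.inl rfl) hb')
      · exact h
    have hrow' : ∀ a b, (a = i ∨ a = k) → b ≠ j → b ≠ l →
        (X (a, b) : MvPolynomial (Fin m × Fin n) F) ∈ p := by
      rintro a b (rfl | rfl) hj hl
      · exact hrow _ _ _ (Or.inl rfl) (Or.inr rfl) hik hj hl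
      · exact hrow _ _ _ (Or.inr rfl) (Or.inl rfl) hik.symm hj hl
    have hcol' : ∀ a b, (b = j ∨ b = l) → a ≠ i → a ≠ k →
        (X (a, b) : MvPolynomial (Fin m × Fin n) F) ∈ p := by
      rintro a b (rfl | rfl) hj hl
      · exact hcol _ _ _ (Or.inl rfl) (Or.inr rfl) hjl hj hl
      · exact hcol _ _ _ (Or.inr rfl) (Or.inl rfl) hjl.symm hj hl
    refine Ideal.span_le.2 ?_
    rintro f (hf | ⟨a, b, h, rfl⟩)
    · rw [Set.mem_singleton_iff] at hf
      subst hf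
      exact hIp (perm_mem i k j l hik hjl)
    · by_cases ha : a = i ∨ a = k
      · have hb : ¬ (b = j ∨ b = l) := fun hb => h ⟨ha, hb⟩
        push Not at hb
        exact hrow' _ _ ha hb.1 hb.2
      · push Not at ha
        by_cases hb : b = j ∨ b = l
        · exact hcol' _ _ hb ha.1 ha.2
        · push Not at hb
          have h3 := hIp (perm_mem (F := F) i a j b ha.1.symm hb.1.symm)
          have h4 : X (a, j) * X (i, b) ∈ p :=
            p.mul_mem_right _ (hcol' a j (Or.inl rfl) ha.1 ha.2)
          have h5 := (p.add_mem_iff_left h4).1 h3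
          exact (hp.mem_or_mem h5).resolve_left (hnot _ _ (Or.inl rfl) (Or.inl rfl))

lemma transfer_height {R : Type*} [CommRing R] {I J : Ideal R} (hIJ : I = J) {c : ℕ∞}
    (h : ∃ h : I.IsPrime, Order.height (⟨I, h⟩ : PrimeSpectrum R) = c) :
    ∃ h : J.IsPrime, Order.height (⟨J, h⟩ : PrimeSpectrum R) = c := by
  subst hIJ; exact h

lemma row_height (i₀ : Fin m) : ∃ h : (Ideal.span {f : MvPolynomial (Fin m × Fin n) F |
        ∃ (i : Fin m) (j : Fin n), i ≠ i₀ ∧ f = X (i, j)}).IsPrime,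
      Order.height (⟨_, h⟩ : PrimeSpectrum (MvPolynomial (Fin m × Fin n) F)) =
        ((m - 1) * n : ℕ) := by
  let S : Finset (Fin m × Fin n) := (Finset.univ.erase i₀) ×ˢ Finset.univ
  have hS : S.card = (m - 1) * n := by simp [S]
  rw [← hS]
  refine transfer_height ?_ ⟨_, height_span_X S⟩
  congr 1
  ext f
  constructor
  · rintro ⟨⟨i, j⟩, h, rfl⟩
    exact ⟨i, j, by simpa [S] using h, rfl⟩
  · rintro ⟨i, j, h, rfl⟩
    exact ⟨(i, j), by simpa [S] using h, rfl⟩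

lemma col_height (j₀ : Fin n) : ∃ h : (Ideal.span {f : MvPolynomial (Fin m × Fin n) F |
        ∃ (i : Fin m) (j : Fin n), j ≠ j₀ ∧ f = X (i, j)}).IsPrime,
      Order.height (⟨_, h⟩ : PrimeSpectrum (MvPolynomial (Fin m × Fin n) F)) =
        (m * (n - 1) : ℕ) := by
  let S : Finset (Fin m × Fin n) := Finset.univ ×ˢ (Finset.univ.erase j₀)
  have hS : S.card = m * (n - 1) := by simp [S]
  rw [← hS]
  refine transfer_height ?_ ⟨_, height_span_X S⟩
  congr 1
  ext f
  constructor
  · rintro ⟨⟨i, j⟩, h, rfl⟩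
    exact ⟨i, j, by simpa [S] using h, rfl⟩
  · rintro ⟨i, j, h, rfl⟩
    exact ⟨(i, j), by simpa [S] using h, rfl⟩

lemma block_height (hm : 3 ≤ m) (hn : 3 ≤ n) (i k : Fin m) (j l : Fin n)
    (hik : i ≠ k) (hjl : j ≠ l) : ∃ h : (blockIdeal F i k j l).IsPrime,
      Order.height (⟨_, h⟩ : PrimeSpectrum (MvPolynomial (Fin m × Fin n) F)) =
        (m * n - 3 : ℕ) := by
  let S : Finset (Fin m × Fin n) := (({i, k} : Finset (Fin m)) ×ˢ ({j, l} : Finset (Fin n)))ᶜ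
  have hS : S.card + 1 = m * n - 3 := by
    have h9 : 9 ≤ m * n := Nat.mul_le_mul hm hn
    have : S.card = m * n - 4 := by
      simp [S, Finset.card_compl, Finset.card_pair hik, Finset.card_pair hjl]
    omega
  have hmem : ∀ a b, (a, b) ∈ S ↔ ¬ ((a = i ∨ a = k) ∧ (b = j ∨ b = l)) := by
    intro a b
    simp [S]
  rw [← hS]
  have hn1 : (i, j) ∉ S := by rw [hmem]; tauto
  have hn2 : (i, l) ∉ S := by rw [hmem]; tauto
  have hn3 : (k, j) ∉ S := by rw [hmem]; tauto
  have hn4 : (k, l) ∉ S := by rw [hmem]; tauto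
  refine transfer_height ?_ (height_span_union S
    (X (i, j) * X (k, l) + X (k, j) * X (i, l)) ?_ ?_)
  · unfold blockIdeal
    congr 2
    ext f
    constructor
    · rintro ⟨⟨i, j⟩, h, rfl⟩
      exact ⟨i, j, (hmem _ _).1 h, rfl⟩
    · rintro ⟨i, j, h, rfl⟩
      exact ⟨(i, j), (hmem _ _).2 h, rfl⟩
  · simp [killVars, hn1, hn2, hn3, hn4]
  · apply prime_perm <;> simp [hik, hjl, hik.symm, hjl.symm]

end Perm

/-- `R = F[x_{ij}]` is the polynomial ring in the entries of the generic m×n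
matrix (m, n ≥ 3), char F ≠ 2, and `P₂(M)` is the ideal of 2×2 subpermanents.
Type (1) primes (all entries outside one row) have height `(m-1)n`, type (2)
primes (all entries outside one column) have height `m(n-1)`, and type (3)
primes (one 2×2 subpermanent together with all entries outside its 2×2 block)
have height `mn - 3`.  Consequently, if `(m,n) ≠ (3,3)` there are minimal
primes of `P₂(M)` of different heights, so `R/P₂(M)` is not equidimensional. -/
theorem heights_of_minimal_primes (F : Type*) [Field F] (h2 : (2 : F) ≠ 0)
    (m n : ℕ) (hm : 3 ≤ m) (hn : 3 ≤ n) :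
    (∀ i₀ : Fin m, ∃ h : (Ideal.span {f : MvPolynomial (Fin m × Fin n) F |
        ∃ (i : Fin m) (j : Fin n), i ≠ i₀ ∧ f = X (i, j)}).IsPrime,
      Order.height (⟨_, h⟩ : PrimeSpectrum (MvPolynomial (Fin m × Fin n) F)) =
        ((m - 1) * n : ℕ)) ∧
    (∀ j₀ : Fin n, ∃ h : (Ideal.span {f : MvPolynomial (Fin m × Fin n) F |
        ∃ (i : Fin m) (j : Fin n), j ≠ j₀ ∧ f = X (i, j)}).IsPrime,
      Order.height (⟨_, h⟩ : PrimeSpectrum (MvPolynomial (Fin m × Fin n) F)) =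
        (m * (n - 1) : ℕ)) ∧
    (∀ (i k : Fin m) (j l : Fin n), i < k → j < l →
      ∃ h : (Ideal.span ({X (i, j) * X (k, l) + X (k, j) * X (i, l)} ∪
          {f : MvPolynomial (Fin m × Fin n) F |
            ∃ (p : Fin m) (q : Fin n),
              ¬ ((p = i ∨ p = k) ∧ (q = j ∨ q = l)) ∧ f = X (p, q)})).IsPrime,
      Order.height (⟨_, h⟩ : PrimeSpectrum (MvPolynomial (Fin m × Fin n) F)) =
        (m * n - 3 : ℕ)) ∧
    ((m, n) ≠ (3, 3) →
      ∃ P Q : Ideal (MvPolynomial (Fin m × Fin n) F),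
        P ∈ (Ideal.span {f : MvPolynomial (Fin m × Fin n) F |
          ∃ (i k : Fin m) (j l : Fin n), i < k ∧ j < l ∧
            f = X (i, j) * X (k, l) + X (k, j) * X (i, l)}).minimalPrimes ∧
        Q ∈ (Ideal.span {f : MvPolynomial (Fin m × Fin n) F |
          ∃ (i k : Fin m) (j l : Fin n), i < k ∧ j < l ∧
            f = X (i, j) * X (k, l) + X (k, j) * X (i, l)}).minimalPrimes ∧
        ∃ (hP : P.IsPrime) (hQ : Q.IsPrime),
          Order.height (⟨P, hP⟩ : PrimeSpectrum (MvPolynomial (Fin m × Fin n) F)) ≠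
            Order.height (⟨Q, hQ⟩ : PrimeSpectrum (MvPolynomial (Fin m × Fin n) F))) := by
  refine ⟨row_height, col_height, ?_, ?_⟩
  · intro i k j l hik hjl
    exact block_height hm hn i k j l hik.ne hjl.ne
  · intro hne
    let i : Fin m := ⟨0, by omega⟩
    let k : Fin m := ⟨1, by omega⟩
    let j : Fin n := ⟨0, by omega⟩
    let l : Fin n := ⟨1, by omega⟩
    have hik : i ≠ k := by simp [i, k]
    have hjl : j ≠ l := by simp [j, l]
    obtain ⟨hQ, hQh⟩ := block_height (F := F) hm hn i k j l hik hjl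
    have h9 : 9 ≤ m * n := Nat.mul_le_mul hm hn
    by_cases hn3 : n = 3
    · have hm3 : m ≠ 3 := by rintro rfl; exact hne (by rw [hn3])
      obtain ⟨hP, hPh⟩ := col_height (F := F) (m := m) j
      refine ⟨_, _, col_minimal h2 hm j hP, block_minimal h2 i k j l hik hjl hQ, hP, hQ, ?_⟩
      rw [hPh, hQh]
      intro h
      have h' : m * (n - 1) = m * n - 3 := by exact_mod_cast h
      rw [Nat.mul_sub, mul_one] at h'
      subst hn3
      omega
    · obtain ⟨hP, hPh⟩ := row_height (F := F) (n := n) i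
      refine ⟨_, _, row_minimal h2 hn i hP, block_minimal h2 i k j l hik hjl hQ, hP, hQ, ?_⟩
      rw [hPh, hQh]
      intro h
      have h' : (m - 1) * n = m * n - 3 := by exact_mod_cast h
      rw [Nat.sub_mul, one_mul] at h'
      have : n ≤ m * n := Nat.le_mul_of_pos_left n (by omega)
      omega
end
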